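/- Let d ≥ 2 and 0 < s < d be integers, let Σ = {A, H, T, X} be a four-element set, and let W₀ be the set of multisets of size d over Σ of one of the following three forms: one A and d−1 X's; s+1 H's and d−s−1 X's; d−s+1 T's and s−1 X's. Set 𝐀 = {X}, 𝐇 = {H,X}, 𝐓 = {T,X}, 𝐗 = {A,H,T,X}. Then for every d-tuple (S₁,…,S_d) with each S_i ∈ {𝐀, 𝐇, 𝐓, 𝐗}, there exist x₁ ∈ S₁, …, x_d ∈ S_d with the multiset {x₁,…,x_d} ∈ W₀ if and only if some S_i equals 𝐗, or at least s+1 of the S_i equal 𝐇, or at least d−s+1 of the S_i equal 𝐓. -/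

import Mathlib

/-- The four-letter alphabet `Σ = {A, H, T, X}`. -/
inductive Sig : Type
  | A | H | T | X
deriving DecidableEq

instance : Fintype Sig where
  elems := ⟨[Sig.A, Sig.H, Sig.T, Sig.X], by decide⟩
  complete := by intro x; cases x <;> decide

/-- The multiset of values of a tuple. -/
def tupleMultiset {n : ℕ} (f : Fin n → Sig) : Multiset Sig :=
  (Finset.univ : Finset (Fin n)).val.map f

/-- Membership in the white constraint `W₀` of `FDSO(s)`: the multiset consists of one `A`
and `d-1` `X`'s, or of `s+1` `H`'s and `d-s-1` `X`'s, or of `d-s+1` `T`'s and `s-1` `X`'s. -/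
def InW0 (d s : ℕ) (m : Multiset Sig) : Prop :=
  m = Sig.A ::ₘ Multiset.replicate (d - 1) Sig.X ∨
  m = Multiset.replicate (s + 1) Sig.H + Multiset.replicate (d - s - 1) Sig.X ∨
  m = Multiset.replicate (d - s + 1) Sig.T + Multiset.replicate (s - 1) Sig.X

open Classical in
theorem tm_ite {d : ℕ} (t : Finset (Fin d)) (c : Sig) :
    tupleMultiset (fun i => if i ∈ t then c else Sig.X) =
      Multiset.replicate t.card c + Multiset.replicate (d - t.card) Sig.X := by
  have h : (Finset.univ : Finset (Fin d)).val = t.val + (tᶜ).val := by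
    rw [← Finset.union_compl t, ← Finset.disjUnion_eq_union _ _ disjoint_compl_right]
    rfl
  unfold tupleMultiset
  rw [h, Multiset.map_add]
  congr 1
  · rw [Multiset.map_congr rfl (g := fun _ => c) (fun i hi => by rw [Finset.mem_val] at hi; exact if_pos hi), Multiset.map_const']
    rfl
  · rw [Multiset.map_congr rfl (g := fun _ => Sig.X)
      (fun i hi => by rw [Finset.mem_val, Finset.mem_compl] at hi; exact if_neg hi), Multiset.map_const']
    congr 1
    change (tᶜ).card = _
    rw [Finset.card_compl, Fintype.card_fin]

theorem tm_count {d : ℕ} (f : Fin d → Sig) (S : Fin d → Set Sig) (B : Set Sig) (c : Sig)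
    (h : ∀ i, f i = c → S i = B) :
    (tupleMultiset f).count c ≤ {i : Fin d | S i = B}.ncard := by
  classical
  have : (tupleMultiset f).count c = ({i : Fin d | f i = c}).ncard := by
    unfold tupleMultiset
    rw [Multiset.count_map, Set.ncard_eq_toFinset_card']
    simp only [Finset.card_def, Set.toFinset_ofPred, Finset.filter_val, eq_comm]
  rw [this]
  exact Set.ncard_le_ncard h (Set.toFinite _)

theorem tm_exists {d : ℕ} (S : Fin d → Set Sig) (B : Set Sig) (c : Sig) (k : ℕ)
    (hX : ∀ i, Sig.X ∈ S i) (hc : c ∈ B) (hk : k ≤ {i : Fin d | S i = B}.ncard) :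
    ∃ f : Fin d → Sig, (∀ i, f i ∈ S i) ∧
      tupleMultiset f = Multiset.replicate k c + Multiset.replicate (d - k) Sig.X := by
  classical
  rw [Set.ncard_eq_toFinset_card'] at hk
  obtain ⟨t, ht, rfl⟩ := Finset.exists_subset_card_eq hk
  refine ⟨_, fun i => ?_, tm_ite t c⟩
  split_ifs with hi
  · have := ht hi
    simp only [Set.mem_toFinset, Set.mem_ofPred_eq] at this
    rw [this]; exact hc
  · exact hX i

/-- With `𝐀 = {X}`, `𝐇 = {H,X}`, `𝐓 = {T,X}`, `𝐗 = Σ`: a `d`-tuple of sets,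
each among `𝐀, 𝐇, 𝐓, 𝐗`, admits a choice forming a multiset in `W₀` iff some coordinate is
`𝐗`, or at least `s+1` coordinates are `𝐇`, or at least `d-s+1` coordinates are `𝐓`. -/
theorem stmt_13 (d s : ℕ) (hd : 2 ≤ d) (hs0 : 0 < s) (hsd : s < d)
    (S : Fin d → Set Sig)
    (hS : ∀ i, S i = ({Sig.X} : Set Sig) ∨ S i = ({Sig.H, Sig.X} : Set Sig) ∨
      S i = ({Sig.T, Sig.X} : Set Sig) ∨ S i = Set.univ) :
    (∃ f : Fin d → Sig, (∀ i, f i ∈ S i) ∧ InW0 d s (tupleMultiset f)) ↔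
    ((∃ i, S i = Set.univ) ∨
     s + 1 ≤ {i : Fin d | S i = ({Sig.H, Sig.X} : Set Sig)}.ncard ∨
     d - s + 1 ≤ {i : Fin d | S i = ({Sig.T, Sig.X} : Set Sig)}.ncard) := by
  have hX : ∀ i, Sig.X ∈ S i := by
    intro i
    rcases hS i with h | h | h | h <;> simp [h]
  constructor
  · rintro ⟨f, hf, hW⟩
    by_cases hu : ∃ i, S i = Set.univ
    · exact Or.inl hu
    right
    rcases hW with h | h | h
    · exfalso
      have hA : Sig.A ∈ tupleMultiset f := by simp [h]
      obtain ⟨i, -, hi⟩ := Multiset.mem_map.1 hA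
      have h1 := hf i
      rw [hi] at h1
      rcases hS i with h | h | h | h
      · simp [h] at h1
      · simp [h] at h1
      · simp [h] at h1
      · exact hu ⟨i, h⟩
    · left
      have := tm_count f S {Sig.H, Sig.X} Sig.H (by
        intro i hi
        have h1 := hf i
        rw [hi] at h1
        rcases hS i with h | h | h | h
        · simp [h] at h1
        · exact h
        · simp [h] at h1
        · exact (hu ⟨i, h⟩).elim)
      rw [h] at this
      simpa [Multiset.count_replicate] using this
    · right
      have := tm_count f S {Sig.T, Sig.X} Sig.T (by
        intro i hi
        have h1 := hf i
        rw [hi] at h1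
        rcases hS i with h | h | h | h
        · simp [h] at h1
        · simp [h] at h1
        · exact h
        · exact (hu ⟨i, h⟩).elim)
      rw [h] at this
      simpa [Multiset.count_replicate] using this
  · rintro (⟨i, hi⟩ | h | h)
    · obtain ⟨f, hf, hm⟩ := tm_exists S Set.univ Sig.A 1 hX (Set.mem_univ _)
        ((Set.ncard_pos (Set.toFinite _)).2 ⟨i, hi⟩)
      exact ⟨f, hf, Or.inl (by rw [hm]; simp)⟩
    · obtain ⟨f, hf, hm⟩ := tm_exists S _ Sig.H _ hX (by simp) h
      exact ⟨f, hf, Or.inr (Or.inl (by rw [hm, Nat.sub_add_eq]))⟩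
    · obtain ⟨f, hf, hm⟩ := tm_exists S _ Sig.T _ hX (by simp) h
      refine ⟨f, hf, Or.inr (Or.inr ?_)⟩
      rw [hm, show d - (d - s + 1) = s - 1 by omega]
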